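/- Let n ≥ 2 be an integer, A ≥ 1, M > 0, and let γ be real analytic on (1 − Δ, 1 + Δ) with |γ(r) − 1 − (r − 1)ⁿ| ≤ M |r − 1|^{n+1} for all r ∈ (1 − Δ, 1 + Δ). Then there exist s₀ > 0 and C > 0 (depending on n, A, M, Δ) such that for all s ∈ (0, s₀] and all (η₁, η₂) with |η₁| ≤ A and 1 ≤ η₂ ≤ 2, the rescaled profile g_s(η₁, η₂) := s^{-n} (γ(√(1 + s(η₁² + 2η₂) + s² η₂²)) − 1) satisfies |g_s(η₁, η₂) − 2^{-n} (η₁² + 2η₂)ⁿ| ≤ C s. -/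

import Mathlib

/-!
Put `r = √(1 + sP + s²η₂²)` with `P = η₁² + 2η₂`, and `u = (r - 1) / s`. Squaring gives
`u (2 + s u) = P + s η₂²` (`rescaled_radius`), so `u` is bounded and `u = P / 2 + O(s)`.
The hypothesis on `γ` says that the rescaled profile is `uⁿ + O(s uⁿ⁺¹)`, and `uⁿ` differs from
`(P / 2)ⁿ` by `O(s)` because the power map is Lipschitz on bounded sets. Everything is bounded in
terms of `K = A² + 8`, which dominates `P + s η₂²` for `s ≤ 1`.
-/

noncomputable section

/-- The square root equals `1 + s u` with `u` bounded by `K` and `O(s)`-close to half of the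
linear coefficient `P`. -/
lemma rescaled_radius {s P y K : ℝ} (hs : 0 < s) (hs1 : s ≤ 1) (hP : 0 ≤ P) (hy : 1 ≤ y)
    (hy2 : y ≤ 2) (hPK : P + 4 ≤ K) :
    ∃ u : ℝ, Real.sqrt (1 + s * P + s ^ 2 * y ^ 2) = 1 + s * u ∧ 0 ≤ u ∧ u ≤ K ∧
      |u - P / 2| ≤ K ^ 2 * s := by
  have hnn : 0 ≤ s * P + s ^ 2 * y ^ 2 := by positivity
  have hr2 := Real.sq_sqrt (show 0 ≤ 1 + s * P + s ^ 2 * y ^ 2 by linarith)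
  have hr1 : 1 ≤ Real.sqrt (1 + s * P + s ^ 2 * y ^ 2) := by
    rw [Real.one_le_sqrt]; linarith
  set r := Real.sqrt (1 + s * P + s ^ 2 * y ^ 2)
  obtain ⟨u, hu⟩ : ∃ u, r = 1 + s * u := ⟨(r - 1) / s, by field_simp; ring⟩
  have hu0 : 0 ≤ u := by
    have : 0 ≤ s * u := by linarith
    exact nonneg_of_mul_nonneg_right this hs
  have hquad : u * (2 + s * u) = P + s * y ^ 2 := by
    apply mul_left_cancel₀ hs.ne'
    rw [hu] at hr2
    linarith
  have hysq : y ^ 2 ≤ 4 := by nlinarith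
  have hsy : s * y ^ 2 ≤ 4 := by nlinarith [sq_nonneg y]
  have hsu : 0 ≤ s * u ^ 2 := by positivity
  have huK : u ≤ K := by nlinarith
  have huK2 : u ^ 2 ≤ K ^ 2 := pow_le_pow_left₀ hu0 huK 2
  have hK4 : 4 ≤ K ^ 2 := by nlinarith
  have h1 : s * u ^ 2 ≤ s * K ^ 2 := mul_le_mul_of_nonneg_left huK2 hs.le
  have h2 : s * y ^ 2 ≤ s * K ^ 2 := mul_le_mul_of_nonneg_left (hysq.trans hK4) hs.le
  have h3 : 0 ≤ s * y ^ 2 := by positivity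
  refine ⟨u, hu, hu0, huK, ?_⟩
  rw [abs_le]
  constructor <;> linarith

/-- Convergence of the rescaled quasi-torus caps to the reference surface: if
`γ(r) = 1 + (r−1)ⁿ + O((r−1)^{n+1})` then the rescaled profile
`g_s(η₁, η₂) = s^{-n}(γ(√(1 + s(η₁² + 2η₂) + s²η₂²)) − 1)` is within `O(s)` of
`2^{-n}(η₁² + 2η₂)ⁿ`, uniformly on `{|η₁| ≤ A, 1 ≤ η₂ ≤ 2}`. -/
theorem rescaled_quasi_torus_cap_approximation (n : ℕ) (hn : 2 ≤ n) (A M Δ : ℝ)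
    (hA : 1 ≤ A) (hM : 0 < M) (hΔ : 0 < Δ) (γ : ℝ → ℝ)
    (hγ : AnalyticOnNhd ℝ γ (Set.Ioo (1 - Δ) (1 + Δ)))
    (happrox : ∀ r ∈ Set.Ioo (1 - Δ) (1 + Δ), |γ r - 1 - (r - 1)^n| ≤ M * |r - 1|^(n+1)) :
    ∃ s₀ C : ℝ, 0 < s₀ ∧ 0 < C ∧ ∀ s : ℝ, 0 < s → s ≤ s₀ →
      ∀ η₁ η₂ : ℝ, |η₁| ≤ A → 1 ≤ η₂ → η₂ ≤ 2 →
        |s ^ (-(n : ℤ)) * (γ (Real.sqrt (1 + s * (η₁^2 + 2*η₂) + s^2 * η₂^2)) - 1) -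
          ((2:ℝ)^n)⁻¹ * (η₁^2 + 2*η₂)^n| ≤ C * s := by
  have hK : 0 < A ^ 2 + 8 := by positivity
  obtain ⟨K, hKdef⟩ : ∃ K, K = A ^ 2 + 8 := ⟨_, rfl⟩
  rw [← hKdef] at hK
  -- `s ≤ Δ / (2K)` keeps the radius `1 + s u` inside the interval where `happrox` applies.
  refine ⟨min 1 (Δ / (2 * K)), M * K ^ (n + 1) + K ^ 2 * n * K ^ (n - 1), by positivity,
    by positivity, ?_⟩
  intro s hs hs0 η₁ η₂ h1 h2 h3
  have hs1 : s ≤ 1 := hs0.trans (min_le_left _ _)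
  have hsΔ : s * (2 * K) ≤ Δ := (le_div_iff₀ (by positivity)).1 (hs0.trans (min_le_right _ _))
  have hsq : η₁ ^ 2 ≤ A ^ 2 := sq_le_sq' (abs_le.1 h1).1 (abs_le.1 h1).2
  obtain ⟨P, hP⟩ : ∃ P, P = η₁ ^ 2 + 2 * η₂ := ⟨_, rfl⟩
  rw [← hP]
  have hP0 : 0 ≤ P := by rw [hP]; positivity
  have hPK : P + 4 ≤ K := by linarith
  obtain ⟨u, hu, hu0, huK, hclose⟩ := rescaled_radius hs hs1 hP0 h2 h3 hPK
  rw [hu]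
  have hsu0 : 0 ≤ s * u := by positivity
  have hsuK : s * u ≤ s * K := mul_le_mul_of_nonneg_left huK hs.le
  have hγu := happrox (1 + s * u) ⟨by linarith, by linarith⟩
  rw [show 1 + s * u - 1 = s * u by ring, abs_of_nonneg hsu0] at hγu
  have hpow : |u ^ n - (P / 2) ^ n| ≤ K ^ 2 * s * n * K ^ (n - 1) := by
    refine (abs_pow_sub_pow_le u (P / 2) n).trans ?_
    have hmax : max |u| |P / 2| ≤ K := by
      rw [abs_of_nonneg hu0, abs_of_nonneg (by positivity)]
      exact max_le huK (by linarith)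
    gcongr
  have herr : |s ^ (-(n : ℤ)) * (γ (1 + s * u) - 1 - (s * u) ^ n)| ≤ M * K ^ (n + 1) * s := by
    rw [abs_mul, abs_of_pos (by positivity), zpow_neg, zpow_natCast]
    calc (s ^ n)⁻¹ * |γ (1 + s * u) - 1 - (s * u) ^ n|
        ≤ (s ^ n)⁻¹ * (M * (s * u) ^ (n + 1)) := by gcongr
      _ = M * u ^ (n + 1) * s := by
          rw [mul_pow, pow_succ s]
          field_simp
      _ ≤ M * K ^ (n + 1) * s := by gcongr
  have hsplit : s ^ (-(n : ℤ)) * (γ (1 + s * u) - 1) - ((2 : ℝ) ^ n)⁻¹ * P ^ n =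
      s ^ (-(n : ℤ)) * (γ (1 + s * u) - 1 - (s * u) ^ n) + (u ^ n - (P / 2) ^ n) := by
    rw [zpow_neg, zpow_natCast, mul_pow, div_pow]
    field_simp
    ring
  rw [hsplit]
  refine (abs_add_le _ _).trans ?_
  linarith
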